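/- arXiv:2110.07018 — 3 statements merged into one kernel-verified Lean document; each statement's English description precedes it below -/
import Mathlib

section
/- In every non-idempotent Kleene algebra, for every element p one has 1 + p·p* = p* and 1 + p*·p = p* (the fixed-point identities for star). -/
/-!
The left identity is Lambek's argument: `p⋆` is the least `x` with `1 + p * x ≤ x`, and
`1 + p * p⋆` is another such `x` by monotonicity. The left identity makes `p * p⋆` a solution of
`p + p * x = x`, so left induction gives `p⋆ * p ≤ p * p⋆` and hence `1 + p⋆ * p ≤ p⋆`. The
converse is Lambek's argument again, with right induction.
-/

/-- A non-idempotent Kleene algebra (NKA): a (not necessarily additively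
idempotent) semiring equipped with a partial order preserved by `+` and `*`,
and a star operation satisfying `1 + p * p⋆ ≤ p⋆` and the two induction laws. -/
class NKA (K : Type*) extends Semiring K, PartialOrder K where
  star : K → K
  add_le_add' : ∀ {p q r s : K}, p ≤ q → r ≤ s → p + r ≤ q + s
  mul_le_mul' : ∀ {p q r s : K}, p ≤ q → r ≤ s → p * r ≤ q * s
  one_add_mul_star_le : ∀ p : K, 1 + p * star p ≤ star p
  star_ind_left : ∀ {p q r : K}, q + p * r ≤ r → star p * q ≤ r
  star_ind_right : ∀ {p q r : K}, q + r * p ≤ r → q * star p ≤ r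

postfix:max "⋆" => NKA.star

/-- Fixed-point identities for star in any non-idempotent Kleene algebra:
`1 + p * p⋆ = p⋆` and `1 + p⋆ * p = p⋆`. -/
theorem nka_fixed_point {K : Type*} [NKA K] (p : K) :
    1 + p * p⋆ = p⋆ ∧ 1 + p⋆ * p = p⋆ := by
  have left : 1 + p * p⋆ = p⋆ := by
    apply le_antisymm (NKA.one_add_mul_star_le p)
    -- `1 + p * p⋆` is itself a pre-fixed point of `x ↦ 1 + p * x`.
    have h : p⋆ * 1 ≤ 1 + p * p⋆ := NKA.star_ind_left
      (NKA.add_le_add' le_rfl (NKA.mul_le_mul' le_rfl (NKA.one_add_mul_star_le p)))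
    rwa [mul_one] at h
  refine ⟨left, ?_⟩
  -- `p * p⋆` solves `p + p * x = x`, by the left identity.
  have comm : p⋆ * p ≤ p * p⋆ := by
    apply NKA.star_ind_left
    apply le_of_eq
    calc p + p * (p * p⋆) = p * (1 + p * p⋆) := by rw [mul_add, mul_one]
      _ = p * p⋆ := by rw [left]
  have le : 1 + p⋆ * p ≤ p⋆ :=
    (NKA.add_le_add' le_rfl comm).trans left.le
  apply le_antisymm le
  have h : 1 * p⋆ ≤ 1 + p⋆ * p := NKA.star_ind_right
    (NKA.add_le_add' le_rfl (NKA.mul_le_mul' le le_rfl))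
  rwa [one_mul] at h
end

section
/- The relation ≲ on series of positive semidefinite operators is preserved under countable unions: let I be a countable type, and for each i ∈ I let ρ_i : J_i → PO(H) and σ_i : K_i → PO(H) be series (with J_i, K_i countable) such that ρ_i ≲ σ_i. Then the combined series (indexed by the sigma type Σ_{i∈I} J_i, sending (i, j) to ρ_i(j)) satisfies ≲ with respect to the combined series (indexed by Σ_{i∈I} K_i, sending (i, k) to σ_i(k)). -/
/-!
A finite subset `I'` of the sigma type meets only finitely many fibres, say those over `S`, and is
the disjoint union of its slices there. Applying the hypothesis in each fibre over `S` with the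
tolerance `ε / (|S| + 1)` and adding up the resulting inequalities bounds the sum over `I'` by the
sum over the union of the chosen finite sets, with total error at most `ε • 1`.
-/

open scoped ComplexOrder

/-- The relation `≲` between series of positive semidefinite operators
(families of `n × n` complex matrices): `SeriesLE ρ σ` holds iff for every
`ε > 0` and every finite subset `I'` of the index set of `ρ` there is a finite
subset `J'` of the index set of `σ` such that
`∑_{i ∈ I'} ρ i ⊑ ε • 1 + ∑_{j ∈ J'} σ j` in the Löwner order. -/
def SeriesLE {n : ℕ} {I J : Type*}
    (ρ : I → Matrix (Fin n) (Fin n) ℂ) (σ : J → Matrix (Fin n) (Fin n) ℂ) : Prop :=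
  ∀ ε : ℝ, 0 < ε → ∀ I' : Finset I, ∃ J' : Finset J,
    ((ε • (1 : Matrix (Fin n) (Fin n) ℂ) + ∑ j ∈ J', σ j) - ∑ i ∈ I', ρ i).PosSemidef

/-- The relation `≲` on series of positive semidefinite operators is preserved
under countable unions. -/
theorem seriesLE_sigma {n : ℕ} {I : Type} [Countable I]
    {J K : I → Type} [∀ i, Countable (J i)] [∀ i, Countable (K i)]
    (ρ : (i : I) → J i → Matrix (Fin n) (Fin n) ℂ)
    (σ : (i : I) → K i → Matrix (Fin n) (Fin n) ℂ)
    (hρ : ∀ i j, (ρ i j).PosSemidef) (hσ : ∀ i k, (σ i k).PosSemidef)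
    (h : ∀ i, SeriesLE (ρ i) (σ i)) :
    SeriesLE (fun x : Σ i, J i => ρ x.1 x.2) (fun x : Σ i, K i => σ x.1 x.2) := by
  classical
  intro ε hε I'
  set S : Finset I := I'.image Sigma.fst with hS
  set F : (i : I) → Finset (J i) := fun i =>
    I'.preimage (Sigma.mk i) sigma_mk_injective.injOn with hF
  have hI : I' = S.sigma F := by
    ext ⟨i, j⟩
    simp only [hS, hF, Finset.mem_sigma, Finset.mem_image, Finset.mem_preimage]
    exact ⟨fun hx => ⟨⟨_, hx, rfl⟩, hx⟩, fun hx => hx.2⟩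
  -- The `+ 1` keeps the tolerance positive when `S` is empty; it leaves one spare `δ • 1`.
  obtain ⟨δ, hδ0, hεδ⟩ : ∃ δ : ℝ, 0 < δ ∧ ε = S.card * δ + δ := by
    have hc : (0 : ℝ) < (S.card : ℝ) + 1 := Nat.cast_add_one_pos _
    refine ⟨ε / ((S.card : ℝ) + 1), div_pos hε hc, ?_⟩
    rw [← add_one_mul, mul_div_cancel₀ _ hc.ne']
  choose G hG using fun i => h i δ hδ0 (F i)
  refine ⟨S.sigma G, ?_⟩
  have key := (Matrix.posSemidef_sum S fun i _ => hG i).add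
    ((Matrix.PosSemidef.one (n := Fin n) (R := ℂ)).smul hδ0.le)
  convert key using 1
  rw [hI, Finset.sum_sigma, Finset.sum_sigma, Finset.sum_sub_distrib, Finset.sum_add_distrib,
    Finset.sum_const, hεδ, add_smul, mul_smul, Nat.cast_smul_eq_nsmul]
  abel
end

section
/- The relation ≲ on series of positive semidefinite operators is preserved by positive linear maps: let E be a linear map on the operators of H that maps positive semidefinite operators to positive semidefinite operators (in particular, any completely positive trace-non-increasing superoperator). If ρ : I → PO(H) and σ : J → PO(H) are series with ρ ≲ σ, then the series (E(ρ_i))_{i∈I} ≲ the series (E(σ_j))_{j∈J}. -/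
/-! Since `E 1` is positive semidefinite, `E 1 ⊑ c • 1` for some `c > 0`. Applying `E` to the
inequality that `ρ ≲ σ` provides for `ε / c` turns the error term `(ε / c) • 1` into
`(ε / c) • E 1 ⊑ ε • 1`. -/

open scoped ComplexOrder

open scoped MatrixOrder Matrix.Norms.L2Operator in
/-- A Hermitian matrix is bounded above by a positive multiple of the identity: its `L²` operator
norm, increased by one so that the bound is nonzero. -/
lemma exists_pos_smul_one_sub_posSemidef {n : ℕ} {A : Matrix (Fin n) (Fin n) ℂ}
    (hA : A.IsHermitian) :
    ∃ c : ℝ, 0 < c ∧ (c • (1 : Matrix (Fin n) (Fin n) ℂ) - A).PosSemidef := by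
  refine ⟨‖A‖ + 1, by positivity, ?_⟩
  have h1 : (‖A‖ • (1 : Matrix (Fin n) (Fin n) ℂ) - A).PosSemidef := by
    have h := IsSelfAdjoint.le_algebraMap_norm_self (a := A) hA
    rwa [Matrix.le_iff, Algebra.algebraMap_eq_smul_one] at h
  have h2 := h1.add Matrix.PosSemidef.one
  convert h2 using 1
  rw [add_smul, one_smul]
  abel

/-- The relation `≲` is preserved by positive linear maps (in particular by
completely positive trace-non-increasing superoperators). -/
theorem seriesLE_map {n : ℕ} {I J : Type} [Countable I] [Countable J]
    (E : Matrix (Fin n) (Fin n) ℂ →ₗ[ℂ] Matrix (Fin n) (Fin n) ℂ)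
    (hE : ∀ A : Matrix (Fin n) (Fin n) ℂ, A.PosSemidef → (E A).PosSemidef)
    (ρ : I → Matrix (Fin n) (Fin n) ℂ) (σ : J → Matrix (Fin n) (Fin n) ℂ)
    (hρ : ∀ i, (ρ i).PosSemidef) (hσ : ∀ j, (σ j).PosSemidef)
    (h : SeriesLE ρ σ) :
    SeriesLE (fun i => E (ρ i)) (fun j => E (σ j)) := by
  intro ε hε I'
  obtain ⟨c, hc, hc1⟩ := exists_pos_smul_one_sub_posSemidef (hE 1 Matrix.PosSemidef.one).isHermitian
  obtain ⟨J', hJ⟩ := h (ε / c) (div_pos hε hc) I'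
  refine ⟨J', ?_⟩
  have h1 := (hE _ hJ).add (hc1.smul (div_pos hε hc).le)
  convert h1 using 1
  rw [map_sub, map_add, map_sum, map_sum, LinearMap.map_smul_of_tower, smul_sub, smul_smul,
    div_mul_cancel₀ _ hc.ne']
  abel
end
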